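/- Let Λ be a τ-stable lattice with Λ = pΛ^∨. Then every D ∈ ℳ(𝔽) with Λ ⊆ D satisfies Λ ⊂¹ D, and the assignment D ↦ D/Λ is a bijection from the set {D ∈ ℳ(𝔽) : Λ ⊆ D} onto the set of 𝔽-subspaces U ⊆ V(Λ) with dim U = 1, U ⊆ U^⊥, dim (U + σ̄U)/U ≤ 1, and U ⊆ U^⊥ ∩ σ̄(U^⊥). -/

import Mathlib

open Pointwise

noncomputable section

variable (p : ℕ) [Fact p.Prime] (𝔽 : Type) [Field 𝔽] [IsAlgClosed 𝔽] [CharP 𝔽 p]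

/-- The Witt ring `W(𝔽)`. -/
abbrev Wp := WittVector p 𝔽

/-- The fraction field `K` of `W(𝔽)`. -/
abbrev Kp := FractionRing (Wp p 𝔽)

/-- `N₀ = K⁴`. -/
abbrev N0 := Fin 4 → Kp p 𝔽

/-- The symplectic form on `N₀`. -/
def omegaForm (x y : N0 p 𝔽) : Kp p 𝔽 :=
  x 0 * y 3 - x 3 * y 0 + x 1 * y 2 - x 2 * y 1

/-- The dual lattice of a `W`-submodule of `N₀`. -/
def dualL (D : Submodule (Wp p 𝔽) (N0 p 𝔽)) : Submodule (Wp p 𝔽) (N0 p 𝔽) where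
  carrier := {x | ∀ d ∈ D, omegaForm p 𝔽 x d ∈ (algebraMap (Wp p 𝔽) (Kp p 𝔽)).range}
  zero_mem' := by
    intro d hd
    have : omegaForm p 𝔽 0 d = 0 := by simp [omegaForm]
    rw [this]; exact zero_mem _
  add_mem' := by
    intro x y hx hy d hd
    have : omegaForm p 𝔽 (x + y) d = omegaForm p 𝔽 x d + omegaForm p 𝔽 y d := by
      simp [omegaForm]; ring
    rw [this]; exact add_mem (hx d hd) (hy d hd)
  smul_mem' := by
    intro c x hx d hd
    have : omegaForm p 𝔽 (c • x) d
        = algebraMap (Wp p 𝔽) (Kp p 𝔽) c * omegaForm p 𝔽 x d := by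
      simp [omegaForm, Algebra.smul_def]; ring
    rw [this]; exact mul_mem ⟨c, rfl⟩ (hx d hd)

variable (σ : Kp p 𝔽 ≃+* Kp p 𝔽)

/-- The semilinear map `τ` on `N₀`, applying `σ` to each coordinate. -/
def tauFun (x : N0 p 𝔽) : N0 p 𝔽 := fun i => σ (x i)

/-- The lattice `τD` generated by the image of `D` under `τ`. -/
def tauL (D : Submodule (Wp p 𝔽) (N0 p 𝔽)) : Submodule (Wp p 𝔽) (N0 p 𝔽) :=
  Submodule.span (Wp p 𝔽) (tauFun p 𝔽 σ '' D)

/-- `D` is a lattice in `N₀`: finitely generated over `W` and spanning `N₀` over `K`. -/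
def IsLattice (D : Submodule (Wp p 𝔽) (N0 p 𝔽)) : Prop :=
  D.FG ∧ Submodule.span (Kp p 𝔽) (D : Set (N0 p 𝔽)) = ⊤

/-- The length of the `W`-module `B / A` (as the Krull dimension of its submodule
lattice). -/
def relLength (A B : Submodule (Wp p 𝔽) (N0 p 𝔽)) : WithBot ℕ∞ :=
  Order.krullDim (Submodule (Wp p 𝔽) (B ⧸ (A.comap B.subtype)))

/-- `A ⊂ᵈ B` : `A ⊆ B` with colength `d`. -/
def SubD (d : ℕ) (A B : Submodule (Wp p 𝔽) (N0 p 𝔽)) : Prop :=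
  A ≤ B ∧ relLength p 𝔽 A B = (d : WithBot ℕ∞)

/-- Membership in `ℳ(𝔽)`. -/
def memM (D : Submodule (Wp p 𝔽) (N0 p 𝔽)) : Prop :=
  IsLattice p 𝔽 D ∧
  SubD p 𝔽 2 ((p : Wp p 𝔽) • dualL p 𝔽 D) D ∧
  SubD p 𝔽 2 D (dualL p 𝔽 D) ∧
  SubD p 𝔽 2 ((p : Wp p 𝔽) • dualL p 𝔽 D) (tauL p 𝔽 σ D) ∧
  SubD p 𝔽 2 (tauL p 𝔽 σ D) (dualL p 𝔽 D) ∧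
  relLength p 𝔽 D (D ⊔ tauL p 𝔽 σ D) ≤ 1

/-- `σ` is the automorphism of `K` induced by the Witt-vector Frobenius. -/
def IsWittFrobenius : Prop :=
  ∀ w : Wp p 𝔽, σ (algebraMap (Wp p 𝔽) (Kp p 𝔽) w)
    = algebraMap (Wp p 𝔽) (Kp p 𝔽) (WittVector.frobeniusEquiv p 𝔽 w)



set_option linter.unusedSectionVars false

lemma aux_relLength_eq (A B : Submodule (Wp p 𝔽) (N0 p 𝔽)) :
    relLength p 𝔽 A B
      = ((Module.length (Wp p 𝔽) (B ⧸ (A.comap B.subtype)) : ℕ∞) : WithBot ℕ∞) :=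
  (Module.coe_length _ _).symm

/-- The relative length as an extended natural number. -/
def auxLen (A B : Submodule (Wp p 𝔽) (N0 p 𝔽)) : ℕ∞ :=
  Module.length (Wp p 𝔽) (B ⧸ (A.comap B.subtype))

lemma aux_relLength_iff (A B : Submodule (Wp p 𝔽) (N0 p 𝔽)) (n : ℕ) :
    relLength p 𝔽 A B = (n : WithBot ℕ∞) ↔ auxLen p 𝔽 A B = n := by
  rw [aux_relLength_eq]
  exact WithBot.coe_inj

lemma auxLen_add {A B C : Submodule (Wp p 𝔽) (N0 p 𝔽)} (hAB : A ≤ B) (hBC : B ≤ C) :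
    auxLen p 𝔽 A C = auxLen p 𝔽 A B + auxLen p 𝔽 B C := by
  unfold auxLen
  have h1 : A.comap B.subtype ≤ (A.comap C.subtype).comap (Submodule.inclusion hBC) := by
    intro x hx; exact hx
  have h2 : A.comap C.subtype ≤ (B.comap C.subtype).comap LinearMap.id := by
    intro x hx; exact hAB hx
  refine Module.length_eq_add_of_exact
    (Submodule.mapQ _ _ (Submodule.inclusion hBC) h1) (Submodule.mapQ _ _ LinearMap.id h2) ?_ ?_ ?_
  · rw [← LinearMap.ker_eq_bot, LinearMap.ker_eq_bot']
    intro x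
    induction x using Submodule.Quotient.induction_on with
    | H x =>
      intro hx
      rw [Submodule.mapQ_apply, Submodule.Quotient.mk_eq_zero] at hx
      rw [Submodule.Quotient.mk_eq_zero]
      exact hx
  · intro x
    induction x using Submodule.Quotient.induction_on with
    | H x => exact ⟨Submodule.Quotient.mk x, by simp⟩
  · intro x
    induction x using Submodule.Quotient.induction_on with
    | H x =>
      rw [Submodule.mapQ_apply, Submodule.Quotient.mk_eq_zero]
      constructor
      · intro hx
        refine ⟨Submodule.Quotient.mk ⟨x.1, hx⟩, ?_⟩
        rw [Submodule.mapQ_apply]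
        rfl
      · rintro ⟨y, hy⟩
        induction y using Submodule.Quotient.induction_on with
        | H y =>
          rw [Submodule.mapQ_apply, Submodule.Quotient.eq] at hy
          have h3 := hAB hy
          have : (x : N0 p 𝔽) = y - ((Submodule.inclusion hBC y - x : C) : N0 p 𝔽) := by
            simp
          show (x : N0 p 𝔽) ∈ B
          rw [this]
          exact sub_mem y.2 h3

lemma auxLen_one {A B : Submodule (Wp p 𝔽) (N0 p 𝔽)} (hAB : A ≤ B) :
    auxLen p 𝔽 A B = 1 ↔ A ⋖ B := by
  rw [covBy_iff_quot_is_simple hAB]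
  exact Module.length_eq_one_iff

lemma auxLen_zero {A B : Submodule (Wp p 𝔽) (N0 p 𝔽)} :
    auxLen p 𝔽 A B = 0 ↔ B ≤ A := by
  unfold auxLen
  rw [Module.length_eq_zero_iff, Submodule.Quotient.subsingleton_iff,
    Submodule.comap_subtype_eq_top]

lemma aux_p_ne : (p : Wp p 𝔽) ≠ 0 := (WittVector.irreducible p).ne_zero

lemma aux_p_neK : (p : Kp p 𝔽) ≠ 0 := by
  have := aux_p_ne p 𝔽
  intro h
  apply this
  apply IsFractionRing.injective (Wp p 𝔽) (Kp p 𝔽)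
  simpa using h

lemma aux_psmul (x : N0 p 𝔽) : (p : Wp p 𝔽) • x = (p : Kp p 𝔽) • x := by
  rw [← algebraMap_smul (Kp p 𝔽) (p : Wp p 𝔽) x, map_natCast]

/-- Multiplication by `p` as an order isomorphism. -/
def auxP : N0 p 𝔽 ≃ₗ[Wp p 𝔽] N0 p 𝔽 :=
  (LinearEquiv.smulOfNeZero (Kp p 𝔽) (N0 p 𝔽) (p : Kp p 𝔽) (aux_p_neK p 𝔽)).restrictScalars _

lemma auxP_apply (x : N0 p 𝔽) : auxP p 𝔽 x = (p : Wp p 𝔽) • x := (aux_psmul p 𝔽 x).symm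

lemma auxP_map (D : Submodule (Wp p 𝔽) (N0 p 𝔽)) :
    (p : Wp p 𝔽) • D = Submodule.orderIsoMapComap (auxP p 𝔽) D := by
  ext x
  rw [Submodule.mem_smul_pointwise_iff_exists]
  change _ ↔ x ∈ Submodule.map (auxP p 𝔽).toLinearMap D
  rw [Submodule.mem_map]
  refine exists_congr fun y => and_congr_right fun _ => ?_
  rw [← auxP_apply]
  rfl

lemma aux_omega_skew (x y : N0 p 𝔽) : omegaForm p 𝔽 x y = - omegaForm p 𝔽 y x := by
  simp [omegaForm]; ring

lemma aux_omega_smul (c : Wp p 𝔽) (x y : N0 p 𝔽) :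
    omegaForm p 𝔽 (c • x) y = algebraMap (Wp p 𝔽) (Kp p 𝔽) c * omegaForm p 𝔽 x y := by
  simp [omegaForm, Algebra.smul_def]; ring

lemma aux_omega_smul_right (c : Wp p 𝔽) (x y : N0 p 𝔽) :
    omegaForm p 𝔽 x (c • y) = algebraMap (Wp p 𝔽) (Kp p 𝔽) c * omegaForm p 𝔽 x y := by
  simp [omegaForm, Algebra.smul_def]; ring

lemma aux_omega_add (x y z : N0 p 𝔽) :
    omegaForm p 𝔽 (x + y) z = omegaForm p 𝔽 x z + omegaForm p 𝔽 y z := by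
  simp [omegaForm]; ring

lemma aux_omega_add_right (x y z : N0 p 𝔽) :
    omegaForm p 𝔽 z (x + y) = omegaForm p 𝔽 z x + omegaForm p 𝔽 z y := by
  simp [omegaForm]; ring

lemma aux_mem_dual {D : Submodule (Wp p 𝔽) (N0 p 𝔽)} {x : N0 p 𝔽} :
    x ∈ dualL p 𝔽 D ↔ ∀ d ∈ D, omegaForm p 𝔽 x d ∈ (algebraMap (Wp p 𝔽) (Kp p 𝔽)).range :=
  Iff.rfl

lemma aux_dual_anti {A B : Submodule (Wp p 𝔽) (N0 p 𝔽)} (h : A ≤ B) :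
    dualL p 𝔽 B ≤ dualL p 𝔽 A := fun _ hx d hd => hx d (h hd)

lemma aux_le_dual_comm {A B : Submodule (Wp p 𝔽) (N0 p 𝔽)} (h : A ≤ dualL p 𝔽 B) :
    B ≤ dualL p 𝔽 A := by
  intro b hb a ha
  rw [aux_omega_skew]
  exact neg_mem (h ha b hb)

lemma aux_dual_dual {Λ : Submodule (Wp p 𝔽) (N0 p 𝔽)}
    (h : Λ = (p : Wp p 𝔽) • dualL p 𝔽 Λ) : dualL p 𝔽 (dualL p 𝔽 Λ) ≤ Λ := by
  intro x hx
  rw [h, Submodule.mem_smul_pointwise_iff_exists]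
  obtain ⟨y, rfl⟩ := (auxP p 𝔽).surjective x
  refine ⟨y, ?_, (auxP_apply p 𝔽 y).symm⟩
  intro d hd
  rw [h, Submodule.mem_smul_pointwise_iff_exists] at hd
  obtain ⟨e, he, rfl⟩ := hd
  have := hx e he
  rwa [auxP_apply, aux_omega_smul, ← aux_omega_smul_right] at this

/-- `σ` preserves `W`. -/
def auxPres : Prop := ∃ e : Wp p 𝔽 ≃+* Wp p 𝔽, ∀ w : Wp p 𝔽,
  σ (algebraMap (Wp p 𝔽) (Kp p 𝔽) w) = algebraMap (Wp p 𝔽) (Kp p 𝔽) (e w)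

lemma auxPres_symm {σ : Kp p 𝔽 ≃+* Kp p 𝔽} (h : auxPres p 𝔽 σ) : auxPres p 𝔽 σ.symm := by
  obtain ⟨e, he⟩ := h
  refine ⟨e.symm, fun w => ?_⟩
  rw [RingEquiv.symm_apply_eq, he]
  simp

lemma auxPres_range {σ : Kp p 𝔽 ≃+* Kp p 𝔽} (h : auxPres p 𝔽 σ) {x : Kp p 𝔽}
    (hx : x ∈ (algebraMap (Wp p 𝔽) (Kp p 𝔽)).range) :
    σ x ∈ (algebraMap (Wp p 𝔽) (Kp p 𝔽)).range := by
  obtain ⟨e, he⟩ := h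
  obtain ⟨w, rfl⟩ := hx
  exact ⟨e w, (he w).symm⟩

lemma aux_mem_tauL {σ : Kp p 𝔽 ≃+* Kp p 𝔽} (h : auxPres p 𝔽 σ)
    (D : Submodule (Wp p 𝔽) (N0 p 𝔽)) (x : N0 p 𝔽) :
    x ∈ tauL p 𝔽 σ D ↔ tauFun p 𝔽 σ.symm x ∈ D := by
  constructor
  · obtain ⟨e, he⟩ := auxPres_symm p 𝔽 h
    intro hx
    induction hx using Submodule.span_induction with
    | mem x hx =>
      obtain ⟨y, hy, rfl⟩ := hx
      have : tauFun p 𝔽 σ.symm (tauFun p 𝔽 σ y) = y := by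
        funext i; simp [tauFun]
      rw [this]; exact hy
    | zero =>
      have : tauFun p 𝔽 σ.symm 0 = 0 := by funext i; simp [tauFun]
      rw [this]; exact zero_mem _
    | add x y _ _ hx hy =>
      have : tauFun p 𝔽 σ.symm (x + y) = tauFun p 𝔽 σ.symm x + tauFun p 𝔽 σ.symm y := by
        funext i; simp [tauFun]
      rw [this]; exact add_mem hx hy
    | smul a x _ hx =>
      have : tauFun p 𝔽 σ.symm (a • x) = e a • tauFun p 𝔽 σ.symm x := by
        funext i; simp [tauFun, Algebra.smul_def, he]
      rw [this]; exact Submodule.smul_mem _ _ hx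
  · intro hx
    refine Submodule.subset_span ⟨_, hx, ?_⟩
    funext i; simp [tauFun]

lemma aux_tau_symm_tau (x : N0 p 𝔽) : tauFun p 𝔽 σ.symm (tauFun p 𝔽 σ x) = x := by
  funext i; simp [tauFun]

lemma aux_tau_tau_symm (x : N0 p 𝔽) : tauFun p 𝔽 σ (tauFun p 𝔽 σ.symm x) = x := by
  funext i; simp [tauFun]

/-- `τ` as an order isomorphism of submodules. -/
def auxTau {σ : Kp p 𝔽 ≃+* Kp p 𝔽} (h : auxPres p 𝔽 σ) :
    Submodule (Wp p 𝔽) (N0 p 𝔽) ≃o Submodule (Wp p 𝔽) (N0 p 𝔽) where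
  toFun := tauL p 𝔽 σ
  invFun := tauL p 𝔽 σ.symm
  left_inv D := by
    ext x
    rw [aux_mem_tauL p 𝔽 (auxPres_symm p 𝔽 h), aux_mem_tauL p 𝔽 h, RingEquiv.symm_symm, aux_tau_symm_tau]
  right_inv D := by
    ext x
    rw [aux_mem_tauL p 𝔽 h, aux_mem_tauL p 𝔽 (auxPres_symm p 𝔽 h), RingEquiv.symm_symm, aux_tau_tau_symm]
  map_rel_iff' := by
    intro A B
    constructor
    · intro hAB x hx
      have h1 : tauFun p 𝔽 σ x ∈ tauL p 𝔽 σ A := Submodule.subset_span ⟨x, hx, rfl⟩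
      have h2 := hAB h1
      change tauFun p 𝔽 σ x ∈ tauL p 𝔽 σ B at h2
      rwa [aux_mem_tauL p 𝔽 h, aux_tau_symm_tau] at h2
    · intro hAB
      exact Submodule.span_mono (Set.image_mono hAB)

lemma aux_omega_tau (x y : N0 p 𝔽) :
    omegaForm p 𝔽 (tauFun p 𝔽 σ x) (tauFun p 𝔽 σ y) = σ (omegaForm p 𝔽 x y) := by
  simp [omegaForm, tauFun]

lemma aux_tau_dual {σ : Kp p 𝔽 ≃+* Kp p 𝔽} (h : auxPres p 𝔽 σ)
    (D : Submodule (Wp p 𝔽) (N0 p 𝔽)) :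
    tauL p 𝔽 σ (dualL p 𝔽 D) = dualL p 𝔽 (tauL p 𝔽 σ D) := by
  ext x
  rw [aux_mem_tauL p 𝔽 h, aux_mem_dual, aux_mem_dual]
  constructor
  · intro hx d hd
    rw [aux_mem_tauL p 𝔽 h] at hd
    have := auxPres_range p 𝔽 h (hx _ hd)
    rw [aux_omega_tau] at this
    simpa using this
  · intro hx d hd
    have h1 : tauFun p 𝔽 σ d ∈ tauL p 𝔽 σ D := Submodule.subset_span ⟨d, hd, rfl⟩
    have := auxPres_range p 𝔽 (auxPres_symm p 𝔽 h) (hx _ h1)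
    rw [← aux_omega_tau] at this
    have h2 : tauFun p 𝔽 σ.symm (tauFun p 𝔽 σ d) = d := by
      funext i; simp [tauFun]
    rwa [h2] at this

lemma aux_isSimple_quot : IsSimpleModule (Wp p 𝔽) (Wp p 𝔽 ⧸ Ideal.span {(p : Wp p 𝔽)}) := by
  rw [isSimpleModule_iff_isCoatom]
  exact (PrincipalIdealRing.isMaximal_of_irreducible (WittVector.irreducible p)).out

/-- Duality step: if `Λ ⋖ U ≤ Λ^∨` then `U^∨ ⋖ Λ^∨`. -/
lemma aux_dual_covBy {Λ U : Submodule (Wp p 𝔽) (N0 p 𝔽)}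
    (h : Λ = (p : Wp p 𝔽) • dualL p 𝔽 Λ) (hU : Λ ⋖ U) (hUd : U ≤ dualL p 𝔽 Λ) :
    dualL p 𝔽 U ⋖ dualL p 𝔽 Λ := by
  have hinj := IsFractionRing.injective (Wp p 𝔽) (Kp p 𝔽)
  obtain ⟨u, huU, huΛ⟩ := Set.exists_of_ssubset hU.lt
  have hspan : Λ ⊔ Submodule.span (Wp p 𝔽) {u} = U := by
    refine (hU.eq_or_eq le_sup_left (sup_le hU.le ?_)).resolve_left ?_
    · rw [Submodule.span_singleton_le_iff_mem]; exact huU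
    · intro h1
      apply huΛ
      have : u ∈ Λ ⊔ Submodule.span (Wp p 𝔽) {u} :=
        Submodule.mem_sup_right (Submodule.mem_span_singleton_self u)
      rwa [h1] at this
  have hpu : (p : Wp p 𝔽) • u ∈ Λ := by
    rw [h]; exact Submodule.smul_mem_pointwise_smul _ _ _ (hUd huU)
  have hex : ∀ x : dualL p 𝔽 Λ, ∃ w : Wp p 𝔽,
      algebraMap (Wp p 𝔽) (Kp p 𝔽) w = omegaForm p 𝔽 x.1 ((p : Wp p 𝔽) • u) :=
    fun x => x.2 _ hpu
  choose g hg using hex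
  let f : dualL p 𝔽 Λ →ₗ[Wp p 𝔽] Wp p 𝔽 :=
    { toFun := g
      map_add' := by
        intro x y
        apply hinj
        rw [map_add, hg, hg, hg, ← aux_omega_add]; rfl
      map_smul' := by
        intro c x
        apply hinj
        rw [RingHom.id_apply, smul_eq_mul, map_mul, hg, hg, ← aux_omega_smul]; rfl }
  let q := (Ideal.span {(p : Wp p 𝔽)}).mkQ ∘ₗ f
  have hker : (dualL p 𝔽 U).comap (dualL p 𝔽 Λ).subtype = LinearMap.ker q := by
    ext x
    have e1 : x ∈ LinearMap.ker q ↔ (p : Wp p 𝔽) ∣ g x := by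
      rw [LinearMap.mem_ker, ← Ideal.mem_span_singleton]
      exact Submodule.Quotient.mk_eq_zero _
    rw [e1, Submodule.mem_comap, aux_mem_dual]
    constructor
    · intro hx
      obtain ⟨w, hw⟩ := hx u huU
      refine ⟨w, hinj ?_⟩
      rw [hg, aux_omega_smul_right, map_mul, hw]; rfl
    · rintro ⟨w, hw⟩ d hd
      have hωu : omegaForm p 𝔽 x.1 u = algebraMap (Wp p 𝔽) (Kp p 𝔽) w := by
        have h1 := hg x
        rw [hw, aux_omega_smul_right, map_mul] at h1
        refine (mul_left_cancel₀ ?_ h1).symm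
        rw [map_natCast]; exact aux_p_neK p 𝔽
      rw [← hspan, Submodule.mem_sup] at hd
      obtain ⟨a, ha, b, hb, rfl⟩ := hd
      obtain ⟨c, rfl⟩ := Submodule.mem_span_singleton.mp hb
      rw [aux_omega_add_right, aux_omega_smul_right]
      refine add_mem (x.2 a ha) (mul_mem ⟨c, rfl⟩ ?_)
      exact ⟨w, hωu.symm⟩
  have hle : dualL p 𝔽 U ≤ dualL p 𝔽 Λ := aux_dual_anti p 𝔽 hU.le
  have hne : q ≠ 0 := by
    intro h0
    rw [h0, LinearMap.ker_zero, Submodule.comap_subtype_eq_top] at hker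
    exact hU.lt.not_ge ((aux_le_dual_comm p 𝔽 hker).trans (aux_dual_dual p 𝔽 h))
  have := aux_isSimple_quot p 𝔽
  have hsurj : Function.Surjective q := LinearMap.surjective_of_ne_zero hne
  rw [covBy_iff_quot_is_simple hle, hker]
  exact IsSimpleModule.congr (q.quotKerEquivOfSurjective hsurj)

lemma aux_lattice_dual {Λ : Submodule (Wp p 𝔽) (N0 p 𝔽)} (hΛ : IsLattice p 𝔽 Λ)
    (h : Λ = (p : Wp p 𝔽) • dualL p 𝔽 Λ) : IsLattice p 𝔽 (dualL p 𝔽 Λ) := by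
  have hle : Λ ≤ dualL p 𝔽 Λ := by
    conv_lhs => rw [h]
    exact Submodule.smul_le_self_of_tower _ _
  constructor
  · have h1 : dualL p 𝔽 Λ = Submodule.map (auxP p 𝔽).symm.toLinearMap Λ := by
      have h2 := auxP_map p 𝔽 (dualL p 𝔽 Λ)
      rw [← h] at h2
      conv_lhs => rw [← (Submodule.orderIsoMapComap (auxP p 𝔽)).symm_apply_apply (dualL p 𝔽 Λ)]
      rw [← h2]
      exact (Submodule.map_equiv_eq_comap_symm (auxP p 𝔽).symm Λ).symm
    rw [h1]
    exact hΛ.1.map _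
  · rw [eq_top_iff, ← hΛ.2]
    exact Submodule.span_mono hle

lemma aux_len_four {M : Submodule (Wp p 𝔽) (N0 p 𝔽)} (hM : IsLattice p 𝔽 M) :
    auxLen p 𝔽 ((p : Wp p 𝔽) • M) M = 4 := by
  haveI : Submodule.IsLattice (Kp p 𝔽) M := ⟨hM.1, hM.2⟩
  have hr : Module.finrank (Wp p 𝔽) M = 4 := by
    simpa using Submodule.IsLattice.finrank_of_pi (Kp p 𝔽) M
  let b : Module.Basis (Fin 4) (Wp p 𝔽) M := Module.finBasisOfFinrankEq _ _ hr
  let I := Ideal.span {(p : Wp p 𝔽)}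
  let q : M →ₗ[Wp p 𝔽] (Fin 4 → Wp p 𝔽 ⧸ I) :=
    LinearMap.pi (fun i => I.mkQ ∘ₗ LinearMap.proj i) ∘ₗ b.equivFun.toLinearMap
  have hsurj : Function.Surjective q := by
    intro y
    choose w hw using fun i => Submodule.mkQ_surjective I (y i)
    refine ⟨b.equivFun.symm w, ?_⟩
    funext i
    have h1 : q (b.equivFun.symm w) i = I.mkQ (b.equivFun (b.equivFun.symm w) i) := rfl
    rw [h1, LinearEquiv.apply_symm_apply, hw]
  have hker : ((p : Wp p 𝔽) • M).comap M.subtype = LinearMap.ker q := by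
    ext x
    rw [Submodule.mem_comap, Submodule.mem_smul_pointwise_iff_exists]
    have e1 : x ∈ LinearMap.ker q ↔ ∀ i, (p : Wp p 𝔽) ∣ b.equivFun x i := by
      rw [LinearMap.mem_ker, funext_iff]
      refine forall_congr' fun i => ?_
      rw [← Ideal.mem_span_singleton]
      exact Submodule.Quotient.mk_eq_zero _
    rw [e1]
    constructor
    · rintro ⟨y, hy, hxy⟩ i
      have : x = (p : Wp p 𝔽) • (⟨y, hy⟩ : M) := Subtype.ext hxy.symm
      rw [this, map_smul]
      exact ⟨_, rfl⟩
    · intro hx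
      choose w hw using hx
      refine ⟨(b.equivFun.symm w : M), Subtype.coe_prop _, ?_⟩
      have : x = (p : Wp p 𝔽) • b.equivFun.symm w := by
        apply b.equivFun.injective
        rw [map_smul, LinearEquiv.apply_symm_apply]
        funext i
        exact hw i
      rw [this]; rfl
  unfold auxLen
  rw [hker, (q.quotKerEquivOfSurjective hsurj).length_eq, Module.length_pi_of_fintype]
  have := aux_isSimple_quot p 𝔽
  have h1 : Module.length (Wp p 𝔽) (Wp p 𝔽 ⧸ I) = 1 := Module.length_eq_one_iff.mpr this
  simp [h1]

/-- Let `Λ` be a `τ`-stable lattice with `Λ = pΛ^∨`. Every `D ∈ ℳ(𝔽)`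
with `Λ ⊆ D` satisfies `Λ ⊂¹ D`, and `D ↦ D/Λ` is a bijection from
`{D ∈ ℳ(𝔽) : Λ ⊆ D}` onto the set of `𝔽`-subspaces `U ⊆ V(Λ) = Λ^∨/Λ` with
`dim U = 1`, `U ⊆ U^⊥`, `dim (U + σ̄U)/U ≤ 1` and `U ⊆ U^⊥ ∩ σ̄(U^⊥)`.

Here subspaces of `V(Λ)` are encoded by `W`-submodules `U` with `Λ ⊆ U ⊆ Λ^∨`;
`dim` becomes the `W`-length relative to `Λ`, the orthogonal complement with respect
to the rescaled form `p·ω` is induced by `U^∨`, and `σ̄U` is induced by `τU`. Under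
this encoding `D ↦ D/Λ` corresponds to `D ↦ D`, so bijectivity becomes an equality
of sets of submodules. -/
theorem stratum_type2_as_DL_variety
    (p : ℕ) [Fact p.Prime] (hp : Odd p)
    (𝔽 : Type) [Field 𝔽] [IsAlgClosed 𝔽] [CharP 𝔽 p]
    (σ : Kp p 𝔽 ≃+* Kp p 𝔽) (hσ : IsWittFrobenius p 𝔽 σ)
    (Λ : Submodule (Wp p 𝔽) (N0 p 𝔽)) (hΛ : IsLattice p 𝔽 Λ)
    (hτΛ : tauL p 𝔽 σ Λ = Λ) (htype2 : Λ = (p : Wp p 𝔽) • dualL p 𝔽 Λ) :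
    (∀ D : Submodule (Wp p 𝔽) (N0 p 𝔽), memM p 𝔽 σ D → Λ ≤ D → SubD p 𝔽 1 Λ D) ∧
    {D : Submodule (Wp p 𝔽) (N0 p 𝔽) | memM p 𝔽 σ D ∧ Λ ≤ D} =
      {U : Submodule (Wp p 𝔽) (N0 p 𝔽) |
        Λ ≤ U ∧ U ≤ dualL p 𝔽 Λ ∧
        relLength p 𝔽 Λ U = (1 : WithBot ℕ∞) ∧
        U ≤ dualL p 𝔽 U ∧
        relLength p 𝔽 U (U ⊔ tauL p 𝔽 σ U) ≤ 1 ∧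
        U ≤ dualL p 𝔽 U ⊓ tauL p 𝔽 σ (dualL p 𝔽 U)} := by
  have hpres : auxPres p 𝔽 σ := ⟨WittVector.frobeniusEquiv p 𝔽, hσ⟩
  have hpart1 : ∀ D : Submodule (Wp p 𝔽) (N0 p 𝔽), memM p 𝔽 σ D → Λ ≤ D →
      SubD p 𝔽 1 Λ D := by
    rintro D ⟨-, hD1, -⟩ hΛD
    refine ⟨hΛD, ?_⟩
    rw [aux_relLength_iff]
    have h2 : auxLen p 𝔽 ((p : Wp p 𝔽) • dualL p 𝔽 D) D = 2 :=
      (aux_relLength_iff p 𝔽 _ _ 2).mp hD1.2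
    have hle : (p : Wp p 𝔽) • dualL p 𝔽 D ≤ Λ := by
      conv_rhs => rw [htype2]
      rw [auxP_map, auxP_map]
      exact (OrderIso.le_iff_le _).mpr (aux_dual_anti p 𝔽 hΛD)
    rw [auxLen_add p 𝔽 hle hΛD] at h2
    have ha : auxLen p 𝔽 Λ D ≠ 0 := by
      intro h0
      have : D = Λ := le_antisymm ((auxLen_zero p 𝔽).mp h0) hΛD
      have h3 : auxLen p 𝔽 ((p : Wp p 𝔽) • dualL p 𝔽 D) Λ = 0 := by
        rw [auxLen_zero, this, ← htype2]
      rw [h0, h3] at h2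
      simp at h2
    have hb : auxLen p 𝔽 ((p : Wp p 𝔽) • dualL p 𝔽 D) Λ ≠ 0 := by
      intro h0
      apply ha
      rw [auxLen_zero] at h0 ⊢
      conv_lhs at h0 => rw [htype2]
      rw [auxP_map, auxP_map, OrderIso.le_iff_le] at h0
      exact (aux_le_dual_comm p 𝔽 h0).trans (aux_dual_dual p 𝔽 htype2)
    generalize auxLen p 𝔽 Λ D = a at *
    generalize auxLen p 𝔽 ((p : Wp p 𝔽) • dualL p 𝔽 D) Λ = b at *
    have hat : a ≠ ⊤ := by rintro rfl; simp at h2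
    have hbt : b ≠ ⊤ := by rintro rfl; simp at h2
    lift a to ℕ using hat
    lift b to ℕ using hbt
    norm_cast at *
    omega
  refine ⟨hpart1, ?_⟩
  ext U
  simp only [Set.mem_setOf_eq]
  constructor
  · rintro ⟨hM, hΛU⟩
    have hM' := hM
    obtain ⟨hlat, hD1, hD2, hD3, hD4, hD5⟩ := hM'
    refine ⟨hΛU, hD2.1.trans (aux_dual_anti p 𝔽 hΛU), (hpart1 U hM hΛU).2, hD2.1, hD5,
      le_inf hD2.1 ?_⟩
    rw [aux_tau_dual p 𝔽 hpres]
    exact aux_le_dual_comm p 𝔽 hD4.1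
  · rintro ⟨hΛU, hUd, hlen, hUU, hlen2, hinf⟩
    have hUτ := hinf.trans inf_le_right
    rw [aux_tau_dual p 𝔽 hpres] at hUτ
    have hτU := aux_le_dual_comm p 𝔽 hUτ
    have hl1 : auxLen p 𝔽 Λ U = 1 := (aux_relLength_iff p 𝔽 _ _ 1).mp hlen
    have hcov := (auxLen_one p 𝔽 hΛU).mp hl1
    have hdcov := aux_dual_covBy p 𝔽 htype2 hcov hUd
    have hpcov : (p : Wp p 𝔽) • dualL p 𝔽 U ⋖ Λ := by
      conv_rhs => rw [htype2]
      rw [auxP_map, auxP_map]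
      exact (apply_covBy_apply_iff _).mpr hdcov
    have hτcov : Λ ⋖ tauL p 𝔽 σ U := by
      conv_lhs => rw [← hτΛ]
      exact (apply_covBy_apply_iff (auxTau p 𝔽 hpres)).mpr hcov
    have hdual := aux_lattice_dual p 𝔽 hΛ htype2
    have h4 := aux_len_four p 𝔽 hdual
    rw [← htype2] at h4
    have hA := (auxLen_one p 𝔽 hdcov.le).mpr hdcov
    have hB := (auxLen_one p 𝔽 hpcov.le).mpr hpcov
    have hC := (auxLen_one p 𝔽 hτcov.le).mpr hτcov
    have key : ∀ X : Submodule (Wp p 𝔽) (N0 p 𝔽), Λ ≤ X → auxLen p 𝔽 Λ X = 1 →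
        X ≤ dualL p 𝔽 U → SubD p 𝔽 2 ((p : Wp p 𝔽) • dualL p 𝔽 U) X ∧
          SubD p 𝔽 2 X (dualL p 𝔽 U) := by
      intro X hX hX1 hXU
      refine ⟨⟨hpcov.le.trans hX, ?_⟩, hXU, ?_⟩
      · rw [aux_relLength_iff, auxLen_add p 𝔽 hpcov.le hX, hB, hX1]
        norm_num
      · rw [aux_relLength_iff]
        have h5 := h4
        rw [auxLen_add p 𝔽 hX (hXU.trans hdcov.le), auxLen_add p 𝔽 hXU hdcov.le, hX1, hA] at h5
        generalize auxLen p 𝔽 X (dualL p 𝔽 U) = a at *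
        have hat : a ≠ ⊤ := by rintro rfl; simp at h5
        lift a to ℕ using hat
        norm_cast at *
        omega
    obtain ⟨k1, k2⟩ := key U hΛU hl1 hUU
    obtain ⟨k3, k4⟩ := key _ hτcov.le hC hτU
    refine ⟨⟨⟨?_, ?_⟩, k1, k2, k3, k4, hlen2⟩, hΛU⟩
    · have : Module.Finite (Wp p 𝔽) (dualL p 𝔽 Λ) := Module.Finite.iff_fg.mpr hdual.1
      have : IsNoetherian (Wp p 𝔽) U := isNoetherian_of_le hUd
      exact Module.Finite.iff_fg.mp inferInstance
    · rw [eq_top_iff, ← hΛ.2]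
      exact Submodule.span_mono hΛU

end
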